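/- Define X_t := ∑_{j=1}^{t} j^{−5/3} · exp(−∑_{k=j+1}^t 1/k) for integers t ≥ 1. Then for every t ≥ 1, X_t ≤ 7·2^{2/3} · t^{−2/3}. -/

import Mathlib

/-- `X t := ∑_{j=1}^{t} j^{−5/3} · exp(−∑_{k=j+1}^t 1/k)`. -/
noncomputable def X (t : ℕ) : ℝ :=
  ∑ j ∈ Finset.Icc 1 t,
    (j : ℝ) ^ (-(5/3) : ℝ) * Real.exp (-∑ k ∈ Finset.Icc (j + 1) t, (1 : ℝ) / k)

/-!
By `1 + 1 / k ≤ exp (1 / k)` and telescoping, the exponential factor of the `j`-th term is at most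
`(j + 1) / (t + 1) ≤ 2 * j / t`. So the sum is at most `2 / t` times `∑ j ≤ t, j ^ (-2/3)`, which is
at most `3 * t ^ (1/3)` by concavity of `x ↦ x ^ (1/3)`. This gives the constant `6`.
-/

theorem exp_neg_one_div_le_div_add_one {x : ℝ} (hx : 0 < x) :
    Real.exp (-(1 / x)) ≤ x / (x + 1) := by
  have hexp : (x + 1) / x ≤ Real.exp (1 / x) := by
    simpa only [add_div, div_self hx.ne', add_comm] using Real.add_one_le_exp (1 / x)
  simpa only [Real.exp_neg, inv_div] using inv_anti₀ (by positivity) hexp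

theorem exp_neg_sum_Icc_one_div_le {m n : ℕ} (hmn : m ≤ n) :
    Real.exp (-∑ k ∈ Finset.Icc (m + 1) n, (1 : ℝ) / k) ≤ (m + 1) / (n + 1) := by
  induction n, hmn using Nat.le_induction with
  | base => simp [div_self (Nat.cast_add_one_ne_zero (R := ℝ) m)]
  | succ n hmn ih =>
    have hstep := exp_neg_one_div_le_div_add_one (Nat.cast_add_one_pos (α := ℝ) n)
    rw [Finset.sum_Icc_succ_top (by lia), neg_add, Real.exp_add]
    push_cast
    calc Real.exp (-∑ k ∈ Finset.Icc (m + 1) n, (1 : ℝ) / k) * Real.exp (-(1 / ((n : ℝ) + 1)))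
        ≤ (m + 1) / (n + 1) * ((n + 1) / (n + 1 + 1)) := by gcongr
      _ = (m + 1) / (n + 1 + 1) := by field_simp

theorem rpow_le_rpow_add_mul_sub {p x y : ℝ} (hp₀ : 0 ≤ p) (hp₁ : p ≤ 1)
    (hx : 0 ≤ x) (hy : 0 < y) : x ^ p ≤ y ^ p + p * y ^ (p - 1) * (x - y) := by
  have bernoulli : (x / y) ^ p ≤ 1 + p * (x / y - 1) := by
    have h := rpow_one_add_le_one_add_mul_self (s := x / y - 1)
      (by linarith [div_nonneg hx hy.le]) hp₀ hp₁
    rwa [add_sub_cancel] at h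
  calc x ^ p = y ^ p * (x / y) ^ p := by
        rw [Real.div_rpow hx hy.le, mul_div_cancel₀ _ (Real.rpow_pos_of_pos hy p).ne']
    _ ≤ y ^ p * (1 + p * (x / y - 1)) := by gcongr
    _ = y ^ p + p * y ^ (p - 1) * (x - y) := by
        rw [Real.rpow_sub_one hy.ne']
        field_simp

theorem sum_Icc_rpow_neg_le {s : ℝ} (hs₀ : 0 ≤ s) (hs₁ : s < 1) (n : ℕ) :
    ∑ j ∈ Finset.Icc 1 n, (j : ℝ) ^ (-s) ≤ (n : ℝ) ^ (1 - s) / (1 - s) := by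
  have hs : 0 < 1 - s := sub_pos.mpr hs₁
  induction n with
  | zero => simp [Real.zero_rpow hs.ne']
  | succ n ih =>
    have tangent : (n : ℝ) ^ (1 - s) ≤ (n + 1) ^ (1 - s) - (1 - s) * (n + 1) ^ (-s) := by
      have h := rpow_le_rpow_add_mul_sub hs.le (sub_le_self 1 hs₀) n.cast_nonneg
        (Nat.cast_add_one_pos (α := ℝ) n)
      rw [sub_sub_cancel_left] at h
      linarith
    rw [Finset.sum_Icc_succ_top (by lia)]
    push_cast
    calc ∑ j ∈ Finset.Icc 1 n, (j : ℝ) ^ (-s) + ((n : ℝ) + 1) ^ (-s)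
        ≤ ((n + 1) ^ (1 - s) - (1 - s) * (n + 1) ^ (-s)) / (1 - s) + (n + 1) ^ (-s) := by
          grw [ih, tangent]
      _ = (n + 1) ^ (1 - s) / (1 - s) := by
          field_simp
          ring

theorem rpow_mul_exp_neg_sum_Icc_one_div_le (a : ℝ) {j n : ℕ} (hj : 1 ≤ j) (hjn : j ≤ n) :
    (j : ℝ) ^ (a - 1) * Real.exp (-∑ k ∈ Finset.Icc (j + 1) n, (1 : ℝ) / k) ≤
      2 / n * (j : ℝ) ^ a := by
  have hj' : (1 : ℝ) ≤ j := by exact_mod_cast hj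
  have hn : (0 : ℝ) < n := by exact_mod_cast hj.trans hjn
  have weight : ((j : ℝ) + 1) / (n + 1) ≤ 2 * j / n := by
    gcongr <;> linarith
  calc (j : ℝ) ^ (a - 1) * Real.exp (-∑ k ∈ Finset.Icc (j + 1) n, (1 : ℝ) / k)
      ≤ (j : ℝ) ^ (a - 1) * (2 * j / n) := by grw [exp_neg_sum_Icc_one_div_le hjn, weight]
    _ = 2 / n * (j : ℝ) ^ a := by
        rw [Real.rpow_sub_one (by positivity)]
        field_simp

theorem sum_rpow_mul_exp_neg_sum_Icc_one_div_le {s : ℝ} (hs₀ : 0 ≤ s) (hs₁ : s < 1)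
    {n : ℕ} (hn : 1 ≤ n) :
    ∑ j ∈ Finset.Icc 1 n,
        (j : ℝ) ^ (-s - 1) * Real.exp (-∑ k ∈ Finset.Icc (j + 1) n, (1 : ℝ) / k) ≤
      2 / (1 - s) * (n : ℝ) ^ (-s) := by
  have hn₀ : (n : ℝ) ≠ 0 := by positivity
  calc ∑ j ∈ Finset.Icc 1 n,
        (j : ℝ) ^ (-s - 1) * Real.exp (-∑ k ∈ Finset.Icc (j + 1) n, (1 : ℝ) / k)
      ≤ ∑ j ∈ Finset.Icc 1 n, 2 / n * (j : ℝ) ^ (-s) :=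
        Finset.sum_le_sum fun j hj ↦
          rpow_mul_exp_neg_sum_Icc_one_div_le (-s) (Finset.mem_Icc.mp hj).1 (Finset.mem_Icc.mp hj).2
    _ ≤ 2 / n * ((n : ℝ) ^ (1 - s) / (1 - s)) := by
        rw [← Finset.mul_sum]
        grw [sum_Icc_rpow_neg_le hs₀ hs₁ n]
    _ = 2 / (1 - s) * (n : ℝ) ^ (-s) := by
        rw [sub_eq_neg_add, Real.rpow_add_one hn₀]
        field_simp

/-- For every `t ≥ 1`, `X t ≤ 7·2^{2/3}·t^{−2/3}`. -/
theorem stmt_5 (t : ℕ) (ht : 1 ≤ t) :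
    X t ≤ 7 * (2 : ℝ) ^ ((2/3) : ℝ) * (t : ℝ) ^ (-(2/3) : ℝ) := by
  have exponent : (-(5 / 3) : ℝ) = -(2 / 3) - 1 := by norm_num
  have constant : 2 / (1 - 2 / 3) ≤ 7 * (2 : ℝ) ^ ((2 / 3) : ℝ) := by
    linarith [Real.one_le_rpow one_le_two (show (0 : ℝ) ≤ 2 / 3 by norm_num)]
  calc X t ≤ 2 / (1 - 2 / 3) * (t : ℝ) ^ (-(2/3) : ℝ) := by
        rw [X, exponent]
        exact sum_rpow_mul_exp_neg_sum_Icc_one_div_le (by norm_num) (by norm_num) ht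
    _ ≤ 7 * (2 : ℝ) ^ ((2/3) : ℝ) * (t : ℝ) ^ (-(2/3) : ℝ) := by gcongr
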